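/- Let K be a universal class and A ∈ K. Then there exists B ∈ K with A ≤ B such that f^B is a total function for every extendable implicit operation f of K. Moreover, if K is a quasivariety and A is subdirectly irreducible relative to K, then B can be chosen to be subdirectly irreducible relative to K. -/

import Mathlib

namespace Impl

open FirstOrder Language

universe u v

/-- A bundled algebra (first-order structure) for the language `L`. -/
structure Alg (L : FirstOrder.Language.{u, u}) : Type (u + 1) where
  carrier : Type u
  [str : L.Structure carrier]

attribute [instance] Alg.str

variable {L : FirstOrder.Language.{u, u}}

/-- The direct product of a family of algebras. -/
def Alg.pi {ι : Type u} (A : ι → Alg L) : Alg L where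
  carrier := ∀ i, (A i).carrier
  str :=
    { funMap := fun {k} f v i => Structure.funMap f fun j => v j i
      RelMap := fun {k} r v => ∀ i, Structure.RelMap r fun j => v j i }

/-- The binary direct product of two algebras. -/
def Alg.prod (A B : Alg L) : Alg L where
  carrier := A.carrier × B.carrier
  str :=
    { funMap := fun {k} f v =>
        (Structure.funMap f fun j => (v j).1, Structure.funMap f fun j => (v j).2)
      RelMap := fun {k} r v =>
        Structure.RelMap r (fun j => (v j).1) ∧ Structure.RelMap r fun j => (v j).2 }

/-- The ultraproduct of a family of algebras with respect to an ultrafilter. -/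
def Alg.uprod {ι : Type u} (F : Ultrafilter ι) (A : ι → Alg L) : Alg L where
  carrier := Filter.Product (F : Filter ι) fun i => (A i).carrier
  str := inferInstance

/-- Closure under isomorphic copies. -/
def ClosedUnderIso (K : Set (Alg L)) : Prop :=
  ∀ A B : Alg L, A ∈ K → Nonempty (A.carrier ≃[L] B.carrier) → B ∈ K

/-- Closure under subalgebras (up to the identification of a subalgebra with an embedding). -/
def ClosedUnderSub (K : Set (Alg L)) : Prop :=
  ∀ A B : Alg L, B ∈ K → Nonempty (A.carrier ↪[L] B.carrier) → A ∈ K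

/-- Closure under direct products. -/
def ClosedUnderProd (K : Set (Alg L)) : Prop :=
  ∀ (ι : Type u) (A : ι → Alg L), (∀ i, A i ∈ K) → Alg.pi A ∈ K

/-- Closure under finite direct products. -/
def ClosedUnderFinProd (K : Set (Alg L)) : Prop :=
  ∀ (ι : Type u), Finite ι → ∀ A : ι → Alg L, (∀ i, A i ∈ K) → Alg.pi A ∈ K

/-- Closure under homomorphic images. -/
def ClosedUnderHomImg (K : Set (Alg L)) : Prop :=
  ∀ A B : Alg L, A ∈ K → ∀ h : A.carrier →[L] B.carrier, Function.Surjective h → B ∈ K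

/-- Closure under ultraproducts. -/
def ClosedUnderUprod (K : Set (Alg L)) : Prop :=
  ∀ (ι : Type u) (F : Ultrafilter ι) (A : ι → Alg L), (∀ i, A i ∈ K) → Alg.uprod F A ∈ K

/-- A universal class: a class closed under isomorphic copies, subalgebras and ultraproducts. -/
def IsUniversalClass (K : Set (Alg L)) : Prop :=
  ClosedUnderIso K ∧ ClosedUnderSub K ∧ ClosedUnderUprod K

/-- A quasivariety: a class closed under isomorphic copies, subalgebras, direct products and
ultraproducts. -/
def IsQuasivariety (K : Set (Alg L)) : Prop :=
  ClosedUnderIso K ∧ ClosedUnderSub K ∧ ClosedUnderProd K ∧ ClosedUnderUprod K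

/-- A variety: a class closed under homomorphic images, subalgebras and direct products. -/
def IsVariety (K : Set (Alg L)) : Prop :=
  ClosedUnderHomImg K ∧ ClosedUnderSub K ∧ ClosedUnderProd K

/-- The least quasivariety containing `K`. -/
def QGen (K : Set (Alg L)) : Set (Alg L) :=
  ⋂₀ { M : Set (Alg L) | IsQuasivariety M ∧ K ⊆ M }

/-- The least variety containing `K`. -/
def VGen (K : Set (Alg L)) : Set (Alg L) :=
  ⋂₀ { M : Set (Alg L) | IsVariety M ∧ K ⊆ M }

/-- An elementary class: the class of all models of some first-order theory. -/
def IsElementary (K : Set (Alg L)) : Prop :=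
  ∃ T : L.Theory, ∀ A : Alg L, A ∈ K ↔ ∀ φ ∈ T, A.carrier ⊨ φ

/-- Finite conjunctions of equations (with `⊤` as the empty conjunction). -/
inductive IsConjEq {α : Type v} : ∀ {k : ℕ}, L.BoundedFormula α k → Prop
  | top {k} : IsConjEq (⊤ : L.BoundedFormula α k)
  | equal {k} (t₁ t₂ : L.Term (α ⊕ Fin k)) : IsConjEq (BoundedFormula.equal t₁ t₂)
  | inf {k} {φ ψ : L.BoundedFormula α k} : IsConjEq φ → IsConjEq ψ → IsConjEq (φ ⊓ ψ)

/-- Positive quantifier-free formulas: built from equations, `⊤` and `⊥` using `⊓` and `⊔`. -/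
inductive IsPosQF {α : Type v} : ∀ {k : ℕ}, L.BoundedFormula α k → Prop
  | falsum {k} : IsPosQF (⊥ : L.BoundedFormula α k)
  | top {k} : IsPosQF (⊤ : L.BoundedFormula α k)
  | equal {k} (t₁ t₂ : L.Term (α ⊕ Fin k)) : IsPosQF (BoundedFormula.equal t₁ t₂)
  | inf {k} {φ ψ : L.BoundedFormula α k} : IsPosQF φ → IsPosQF ψ → IsPosQF (φ ⊓ ψ)
  | sup {k} {φ ψ : L.BoundedFormula α k} : IsPosQF φ → IsPosQF ψ → IsPosQF (φ ⊔ ψ)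

/-- Primitive positive (pp) formulas: existentially quantified finite conjunctions of
equations. -/
inductive IsPP {α : Type v} : ∀ {k : ℕ}, L.BoundedFormula α k → Prop
  | of_conjEq {k} {φ : L.BoundedFormula α k} : IsConjEq φ → IsPP φ
  | ex {k} {φ : L.BoundedFormula α (k + 1)} : IsPP φ → IsPP φ.ex

/-- Existential positive formulas: existentially quantified positive quantifier-free
formulas. -/
inductive IsExistPos {α : Type v} : ∀ {k : ℕ}, L.BoundedFormula α k → Prop
  | of_posQF {k} {φ : L.BoundedFormula α k} : IsPosQF φ → IsExistPos φ
  | ex {k} {φ : L.BoundedFormula α (k + 1)} : IsExistPos φ → IsExistPos φ.ex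

/-- Two formulas are equivalent in a class of algebras. -/
def EquivOn (K : Set (Alg L)) {α : Type v} (φ ψ : L.Formula α) : Prop :=
  ∀ A : Alg L, A ∈ K → ∀ x : α → A.carrier, φ.Realize x ↔ ψ.Realize x

/-- A formula is preserved by homomorphisms in `K`. -/
def PreservedByHomsOn (K : Set (Alg L)) {α : Type v} (φ : L.Formula α) : Prop :=
  ∀ A B : Alg L, A ∈ K → B ∈ K → ∀ (h : A.carrier →[L] B.carrier) (x : α → A.carrier),
    φ.Realize x → φ.Realize fun a => h (x a)

/-- A formula is preserved by direct products in `K`. -/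
def PreservedByProdsOn (K : Set (Alg L)) {α : Type v} (φ : L.Formula α) : Prop :=
  ∀ (ι : Type u) (A : ι → Alg L), (∀ i, A i ∈ K) → ∀ x : α → (Alg.pi A).carrier,
    (∀ i, φ.Realize fun a => x a i) → φ.Realize x

/-- An `n`-ary partial function on a class of algebras `K`: a family assigning to each member of
`K` an `n`-ary partial function on its carrier. -/
def PartialFunOn (K : Set (Alg L)) (n : ℕ) :=
  ∀ (A : Alg L), A ∈ K → ((Fin n → A.carrier) →. A.carrier)

/-- A partial function on `K` is defined by the formula `φ(x₁, …, xₙ, y)` (the last variable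
being the output) when its graph on each member of `K` is the solution set of `φ`. -/
def DefinedBy {K : Set (Alg L)} {n : ℕ} (f : PartialFunOn K n)
    (φ : L.Formula (Fin (n + 1))) : Prop :=
  ∀ (A : Alg L) (hA : A ∈ K) (x : Fin n → A.carrier) (b : A.carrier),
    b ∈ f A hA x ↔ φ.Realize (Fin.snoc x b)

/-- The formula `φ(x₁, …, xₙ, y)` is functional in `K`: for all inputs there is at most one
output satisfying it. -/
def FunctionalIn (K : Set (Alg L)) {n : ℕ} (φ : L.Formula (Fin (n + 1))) : Prop :=
  ∀ A : Alg L, A ∈ K → ∀ (x : Fin n → A.carrier) (b₁ b₂ : A.carrier),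
    φ.Realize (Fin.snoc x b₁) → φ.Realize (Fin.snoc x b₂) → b₁ = b₂

/-- A partial function on `K` is an operation of `K` when it is preserved by all homomorphisms
between members of `K`. -/
def IsOperationOn {K : Set (Alg L)} {n : ℕ} (f : PartialFunOn K n) : Prop :=
  ∀ (A B : Alg L) (hA : A ∈ K) (hB : B ∈ K) (h : A.carrier →[L] B.carrier)
    (x : Fin n → A.carrier) (b : A.carrier),
    b ∈ f A hA x → h b ∈ f B hB fun i => h (x i)

/-- A partial function on `K` is implicit when it is defined by some formula. -/
def IsImplicit {K : Set (Alg L)} {n : ℕ} (f : PartialFunOn K n) : Prop :=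
  ∃ φ : L.Formula (Fin (n + 1)), DefinedBy f φ

/-- An implicit operation of `K`: a partial function that is both implicit and an operation. -/
def IsImplicitOp {K : Set (Alg L)} {n : ℕ} (f : PartialFunOn K n) : Prop :=
  IsImplicit f ∧ IsOperationOn f

/-- An implicit operation is extendable when every tuple in every member of `K` lies in the
domain of the operation in some extension inside `K`. -/
def Extendable {K : Set (Alg L)} {n : ℕ} (f : PartialFunOn K n) : Prop :=
  ∀ (A : Alg L) (hA : A ∈ K) (x : Fin n → A.carrier),
    ∃ (B : Alg L) (hB : B ∈ K) (e : A.carrier ↪[L] B.carrier),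
      (f B hB fun i => e (x i)).Dom

/-- The dominion of a subset `s` of `M` relative to the class `K`. -/
def dominion (K : Set (Alg L)) (M : Type u) [L.Structure M] (s : Set M) : Set M :=
  { b | ∀ C : Alg L, C ∈ K → ∀ g h : M →[L] C.carrier, (∀ a ∈ s, g a = h a) → g b = h b }

/-- The strong epimorphism surjectivity property. -/
def StrongES (K : Set (Alg L)) : Prop :=
  ∀ (A B : Alg L), A ∈ K → B ∈ K → ∀ (f : A.carrier →[L] B.carrier) (b : B.carrier),
    b ∉ Set.range f →
      ∃ C : Alg L, C ∈ K ∧ ∃ g h : B.carrier →[L] C.carrier,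
        (∀ a : A.carrier, g (f a) = h (f a)) ∧ g b ≠ h b

/-- The weak epimorphism surjectivity property: every `K`-epimorphism between finitely
generated members of `K` is surjective. -/
def WeakES (K : Set (Alg L)) : Prop :=
  ∀ (A B : Alg L), A ∈ K → B ∈ K →
    Structure.FG L A.carrier → Structure.FG L B.carrier →
      ∀ f : A.carrier →[L] B.carrier,
        (∀ C : Alg L, C ∈ K → ∀ g h : B.carrier →[L] C.carrier,
          (∀ a : A.carrier, g (f a) = h (f a)) → g = h) →
        Function.Surjective f

/-- The amalgamation property. -/
def HasAmalgamation (K : Set (Alg L)) : Prop :=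
  ∀ (A B C : Alg L), A ∈ K → B ∈ K → C ∈ K →
    ∀ (f : A.carrier ↪[L] B.carrier) (g : A.carrier ↪[L] C.carrier),
      ∃ D : Alg L, D ∈ K ∧ ∃ (f' : B.carrier ↪[L] D.carrier) (g' : C.carrier ↪[L] D.carrier),
        ∀ a : A.carrier, f' (f a) = g' (g a)

/-- A finitely presented member of `K`: an algebra in `K` with a finite presentation, phrased
through the usual universal property of `T(X)/Cg_K(Y)`. -/
def FinitelyPresentedIn (K : Set (Alg L)) (B : Alg L) : Prop :=
  B ∈ K ∧ ∃ (m : ℕ) (Y : Finset (L.Term (Fin m) × L.Term (Fin m))) (b : Fin m → B.carrier),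
    Substructure.closure L (Set.range b) = ⊤ ∧
    (∀ p ∈ Y, p.1.realize b = p.2.realize b) ∧
    ∀ C : Alg L, C ∈ K → ∀ x : Fin m → C.carrier,
      (∀ p ∈ Y, p.1.realize x = p.2.realize x) →
        ∃ g : B.carrier →[L] C.carrier, ∀ i, g (b i) = x i

/-- Subdirectly irreducible relative to `K`. -/
def IsRSI (K : Set (Alg L)) (A : Alg L) : Prop :=
  A ∈ K ∧ ∀ (ι : Type u) (B : ι → Alg L), (∀ i, B i ∈ K) →
    ∀ h : A.carrier ↪[L] (Alg.pi B).carrier,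
      (∀ i, Function.Surjective fun a => h a i) →
        ∃ i, Function.Bijective fun a => h a i

/-- Finitely subdirectly irreducible relative to `K`. -/
def IsRFSI (K : Set (Alg L)) (A : Alg L) : Prop :=
  A ∈ K ∧ ∀ (ι : Type u), Finite ι → ∀ B : ι → Alg L, (∀ i, B i ∈ K) →
    ∀ h : A.carrier ↪[L] (Alg.pi B).carrier,
      (∀ i, Function.Surjective fun a => h a i) →
        ∃ i, Function.Bijective fun a => h a i

/-- A congruence on an algebra: an equivalence relation compatible with all the operations. -/
def IsCongruenceOn (A : Alg L) (θ : A.carrier → A.carrier → Prop) : Prop :=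
  Equivalence θ ∧
    ∀ (k : ℕ) (f : L.Functions k) (x y : Fin k → A.carrier),
      (∀ i, θ (x i) (y i)) → θ (Structure.funMap f x) (Structure.funMap f y)

/-- The quotient of an algebra by (the setoid of) an equivalence relation; when the relation is
a congruence this is the quotient algebra. -/
noncomputable def Alg.quot (A : Alg L) (θ : A.carrier → A.carrier → Prop) (h : Equivalence θ) :
    Alg L where
  carrier := Quotient (⟨θ, h⟩ : Setoid A.carrier)
  str :=
    { funMap := fun {k} f v => Quotient.mk _ (Structure.funMap f fun i => (v i).out)
      RelMap := fun {k} r v => Structure.RelMap r fun i => (v i).out }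

/-- A `K`-congruence of `A`: a congruence whose quotient lies in `K`. -/
def IsRelCong (K : Set (Alg L)) (A : Alg L) (θ : A.carrier → A.carrier → Prop) : Prop :=
  ∃ h : IsCongruenceOn A θ, Alg.quot A θ h.1 ∈ K

/-- The join of two relations in the lattice of `K`-congruences of `A`. -/
def relCongJoin (K : Set (Alg L)) (A : Alg L)
    (θ φ : A.carrier → A.carrier → Prop) (x y : A.carrier) : Prop :=
  ∀ ρ : A.carrier → A.carrier → Prop, IsRelCong K A ρ →
    (∀ a b, θ a b → ρ a b) → (∀ a b, φ a b → ρ a b) → ρ x y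

/-- Relative congruence distributivity: the lattice of `K`-congruences of each member of `K`
is distributive. -/
def RelCongDistributive (K : Set (Alg L)) : Prop :=
  ∀ A : Alg L, A ∈ K → ∀ θ φ ψ : A.carrier → A.carrier → Prop,
    IsRelCong K A θ → IsRelCong K A φ → IsRelCong K A ψ →
      ∀ x y : A.carrier,
        (θ x y ∧ relCongJoin K A φ ψ x y) ↔
          relCongJoin K A (fun a b => θ a b ∧ φ a b) (fun a b => θ a b ∧ ψ a b) x y

/-- The join of two relations in the lattice of congruences of `A`. -/
def congJoin (A : Alg L) (θ φ : A.carrier → A.carrier → Prop) (x y : A.carrier) : Prop :=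
  ∀ ρ : A.carrier → A.carrier → Prop, IsCongruenceOn A ρ →
    (∀ a b, θ a b → ρ a b) → (∀ a b, φ a b → ρ a b) → ρ x y

/-- Congruence permutability for all members of a class. -/
def CongPermutableClass (K : Set (Alg L)) : Prop :=
  ∀ A : Alg L, A ∈ K → ∀ θ φ : A.carrier → A.carrier → Prop,
    IsCongruenceOn A θ → IsCongruenceOn A φ →
      ∀ x y : A.carrier, (∃ z, θ x z ∧ φ z y) ↔ ∃ z, φ x z ∧ θ z y

/-- Congruence distributivity for all members of a class. -/
def CongDistributiveClass (K : Set (Alg L)) : Prop :=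
  ∀ A : Alg L, A ∈ K → ∀ θ φ ψ : A.carrier → A.carrier → Prop,
    IsCongruenceOn A θ → IsCongruenceOn A φ → IsCongruenceOn A ψ →
      ∀ x y : A.carrier,
        (θ x y ∧ congJoin A φ ψ x y) ↔
          congJoin A (fun a b => θ a b ∧ φ a b) (fun a b => θ a b ∧ ψ a b) x y

/-- The congruence extension property. -/
def HasCEP (K : Set (Alg L)) : Prop :=
  ∀ A B : Alg L, A ∈ K → B ∈ K → ∀ e : A.carrier ↪[L] B.carrier,
    ∀ θ : A.carrier → A.carrier → Prop, IsCongruenceOn A θ →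
      ∃ ρ : B.carrier → B.carrier → Prop, IsCongruenceOn B ρ ∧
        ∀ x y : A.carrier, θ x y ↔ ρ (e x) (e y)

/-- The language consisting of one new function symbol `gᵢ` of arity `ar i` for each `i`. -/
def newLang {ι : Type u} (ar : ι → ℕ) : FirstOrder.Language.{u, u} where
  Functions := fun n => { i : ι // ar i = n }
  Relations := fun _ => PEmpty

/-- The `L`-reduct of an algebra in an expanded language `L.sum N`. -/
def algReduct {N : FirstOrder.Language.{u, u}} (B : Alg (L.sum N)) : Alg L where
  carrier := B.carrier
  str := (LHom.sumInl : L →ᴸ L.sum N).reduct B.carrier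

/-- The class `K[L_F]` of expansions of members of `K` on which each operation in the family
`f` is total, interpreting the new symbol `gᵢ` as `f i`. -/
def expClass (K : Set (Alg L)) {ι : Type u} (ar : ι → ℕ)
    (f : ∀ i, PartialFunOn K (ar i)) : Set (Alg (L.sum (newLang ar))) :=
  { B | ∃ hB : algReduct B ∈ K,
      ∀ (i : ι) (x : Fin (ar i) → B.carrier),
        Structure.funMap (L := L.sum (newLang ar)) (M := B.carrier)
            (Sum.inr ⟨i, rfl⟩ : (L.sum (newLang ar)).Functions (ar i)) x
          ∈ f i (algReduct B) hB x }

/-- Closure under subalgebras (and isomorphic copies) inside a fixed language. -/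
def SClosure {L' : FirstOrder.Language.{u, u}} (S : Set (Alg L')) : Set (Alg L') :=
  { A | ∃ B ∈ S, Nonempty (A.carrier ↪[L'] B.carrier) }

/-- Membership in `ext_pp(K)`: an extendable implicit operation defined by a pp formula. -/
def InExtPP {K : Set (Alg L)} {n : ℕ} (f : PartialFunOn K n) : Prop :=
  IsOperationOn f ∧ (∃ φ : L.Formula (Fin (n + 1)), IsPP φ ∧ DefinedBy f φ) ∧ Extendable f

/-- `M` is the pp expansion of `K` induced by the family `f` of extendable pp-definable
implicit operations, with one new symbol of arity `ar i` for each `i`. -/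
def IsPPExpansionVia (K : Set (Alg L)) {ι : Type u} (ar : ι → ℕ)
    (f : ∀ i, PartialFunOn K (ar i)) (M : Set (Alg (L.sum (newLang ar)))) : Prop :=
  (∀ i, 0 < ar i) ∧ (∀ i, InExtPP (f i)) ∧ M = SClosure (expClass K ar f)

/-- Every implicit operation of `K` is interpolated in `M` by a set of terms of the expanded
language. -/
def InterpolatesByTermsInExp (K : Set (Alg L)) {ι : Type u} {ar : ι → ℕ}
    (M : Set (Alg (L.sum (newLang ar)))) : Prop :=
  ∀ n : ℕ, 0 < n → ∀ g : PartialFunOn K n, IsImplicitOp g →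
    ∃ T : Set ((L.sum (newLang ar)).Term (Fin n)),
      ∀ A : Alg (L.sum (newLang ar)), A ∈ M →
        ∀ (hA : algReduct A ∈ K) (x : Fin n → A.carrier) (b : A.carrier),
          b ∈ g (algReduct A) hA x → ∃ t ∈ T, t.realize x = b

/-- `M` is a Beth companion of `K` (via the given expansion datum). -/
def IsBethCompanionVia (K : Set (Alg L)) {ι : Type u} (ar : ι → ℕ)
    (f : ∀ i, PartialFunOn K (ar i)) (M : Set (Alg (L.sum (newLang ar)))) : Prop :=
  IsPPExpansionVia K ar f M ∧ InterpolatesByTermsInExp K M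

/-- A pp expansion is congruence preserving when the `M`-congruences of each member of `M`
coincide with the `K`-congruences of its `L`-reduct. -/
def CongPreserving {N : FirstOrder.Language.{u, u}} (K : Set (Alg L))
    (M : Set (Alg (L.sum N))) : Prop :=
  ∀ A : Alg (L.sum N), A ∈ M → ∀ θ : A.carrier → A.carrier → Prop,
    IsRelCong M A θ ↔ IsRelCong K (algReduct A) θ

/-- Reinterpretation of an `L₁`-algebra as an `L₂`-algebra along a map sending `L₂`-symbols to
`L₁`-terms (both languages are assumed to be purely functional). -/
def reinterpret {L₁ L₂ : FirstOrder.Language.{u, u}} (ρ : ∀ n, L₂.Functions n → L₁.Term (Fin n))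
    (A : Alg L₁) : Alg L₂ where
  carrier := A.carrier
  str :=
    { funMap := fun {k} s x => (ρ k s).realize x
      RelMap := fun {k} _ _ => False }

/-- Two expansions of the same base language `L` are faithfully term equivalent relative to
`L`. -/
def FaithfullyTermEquivRel (L : FirstOrder.Language.{u, u}) {N₁ N₂ : FirstOrder.Language.{u, u}}
    (M₁ : Set (Alg (L.sum N₁))) (M₂ : Set (Alg (L.sum N₂))) : Prop :=
  ∃ (τ : ∀ n, (L.sum N₁).Functions n → (L.sum N₂).Term (Fin n))
    (ρ : ∀ n, (L.sum N₂).Functions n → (L.sum N₁).Term (Fin n)),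
    (∀ (n : ℕ) (s : L.Functions n),
      τ n (Sum.inl s) = Term.func (Sum.inl s : (L.sum N₂).Functions n) Term.var) ∧
    (∀ (n : ℕ) (s : L.Functions n),
      ρ n (Sum.inl s) = Term.func (Sum.inl s : (L.sum N₁).Functions n) Term.var) ∧
    (∀ A : Alg (L.sum N₁), A ∈ M₁ → reinterpret ρ A ∈ M₂) ∧
    (∀ B : Alg (L.sum N₂), B ∈ M₂ → reinterpret τ B ∈ M₁) ∧
    (∀ A : Alg (L.sum N₁), A ∈ M₁ → reinterpret τ (reinterpret ρ A) = A) ∧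
    (∀ B : Alg (L.sum N₂), B ∈ M₂ → reinterpret ρ (reinterpret τ B) = B)

section Helpers

open Structure Filter

/-- A map compatible with the operations is a homomorphism (algebraic languages). -/
def mkHom {L : FirstOrder.Language.{u, u}} [L.IsAlgebraic] {M N : Type u} [L.Structure M]
    [L.Structure N] (g : M → N)
    (hg : ∀ (n : ℕ) (f : L.Functions n) (v : Fin n → M), g (funMap f v) = funMap f (g ∘ v)) :
    M →[L] N where
  toFun := g
  map_fun' := fun {n} f v => hg n f v
  map_rel' := fun r _ _ => isEmptyElim r

/-- The map into an ultraproduct given by a family of eventually compatible maps. -/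
theorem exists_upHom {L : FirstOrder.Language.{u, u}} [L.IsAlgebraic] {M : Type u} [L.Structure M]
    {ι : Type u} (F : Ultrafilter ι) (C : ι → Alg L) (g : ∀ i, M → (C i).carrier)
    (hg : ∀ (n : ℕ) (f : L.Functions n) (v : Fin n → M),
      ∀ᶠ i in (F : Filter ι), g i (funMap f v) = funMap f (g i ∘ v)) :
    ∃ h : M →[L] Filter.Product (F : Filter ι) (fun i => (C i).carrier),
      (∀ x, h x = ((fun i => g i x : ∀ i, (C i).carrier) :
        Filter.Product (F : Filter ι) (fun i => (C i).carrier))) ∧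
      ∀ x y, h x = h y ↔ ∀ᶠ i in (F : Filter ι), g i x = g i y := by
  refine ⟨mkHom (fun x => ((fun i => g i x : ∀ i, (C i).carrier) :
        Filter.Product (F : Filter ι) (fun i => (C i).carrier))) ?_, fun x => rfl, ?_⟩
  · intro n f v
    have := Ultraproduct.funMap_cast (u := F) (M := fun i => (C i).carrier) f
      (fun j i => g i (v j))
    refine Eq.trans ?_ this.symm
    exact Quotient.sound' (hg n f v)
  · intro x y
    exact Quotient.eq''

/-- Formulas defining operations which are extendable. -/
def GoodF {L : FirstOrder.Language.{u, u}} (K : Set (Alg L)) {n : ℕ}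
    (φ : L.Formula (Fin (n + 1))) : Prop :=
  (∀ (A B : Alg L), A ∈ K → B ∈ K → ∀ (h : A.carrier →[L] B.carrier) (x : Fin n → A.carrier)
    (b : A.carrier), φ.Realize (Fin.snoc x b : Fin (n + 1) → A.carrier) →
      φ.Realize (Fin.snoc (fun i => h (x i)) (h b) : Fin (n + 1) → B.carrier)) ∧
  (∀ (A : Alg L), A ∈ K → ∀ x : Fin n → A.carrier, ∃ B : Alg L, B ∈ K ∧
    ∃ (e : A.carrier ↪[L] B.carrier) (b : B.carrier),
      φ.Realize (Fin.snoc (fun i => e (x i)) b : Fin (n + 1) → B.carrier))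

theorem goodF_of {L : FirstOrder.Language.{u, u}} {K : Set (Alg L)} {n : ℕ}
    {f : PartialFunOn K n} {φ : L.Formula (Fin (n + 1))} (hφ : DefinedBy f φ)
    (ho : IsOperationOn f) (he : Extendable f) : GoodF K φ := by
  refine ⟨fun A B hA hB h x b hb => ?_, fun A hA x => ?_⟩
  · rw [← hφ B hB]
    exact ho A B hA hB h x b ((hφ A hA x b).2 hb)
  · obtain ⟨B, hB, e, hd⟩ := he A hA x
    exact ⟨B, hB, e, _, (hφ B hB _ _).1 (Part.get_mem hd)⟩

/-- Finitely many requests can be met. -/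
theorem finite_step {L : FirstOrder.Language.{u, u}} {K : Set (Alg L)} (A : Alg L) (hA : A ∈ K)
    (S : Finset (Σ n : ℕ, L.Formula (Fin (n + 1)) × (Fin n → A.carrier))) :
    ∃ C : Alg L, C ∈ K ∧ ∃ e : A.carrier ↪[L] C.carrier, ∀ p ∈ S, GoodF K p.2.1 →
      ∃ b, p.2.1.Realize (Fin.snoc (fun i => e (p.2.2 i)) b : Fin (p.1 + 1) → C.carrier) := by
  classical
  induction S using Finset.induction_on with
  | empty => exact ⟨A, hA, Embedding.refl L _, by simp⟩
  | insert p S _ ih =>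
    obtain ⟨C, hC, e, he⟩ := ih
    by_cases hp : GoodF K p.2.1
    · obtain ⟨D, hD, e', b, hb⟩ := hp.2 C hC (fun i => e (p.2.2 i))
      refine ⟨D, hD, e'.comp e, fun q hq hgq => ?_⟩
      rcases Finset.mem_insert.1 hq with rfl | hq
      · exact ⟨b, hb⟩
      · obtain ⟨c, hc⟩ := he q hq hgq
        exact ⟨e' c, hgq.1 C D hC hD e'.toHom _ c hc⟩
    · refine ⟨C, hC, e, fun q hq hgq => ?_⟩
      rcases Finset.mem_insert.1 hq with rfl | hq
      · exact absurd hgq hp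
      · exact he q hq hgq

/-- All requests over a nonempty algebra can be met at once. -/
theorem one_step {L : FirstOrder.Language.{u, u}} [L.IsAlgebraic] {K : Set (Alg L)}
    (hU : ClosedUnderUprod K) (A : Alg L) (hA : A ∈ K) (hne : Nonempty A.carrier) :
    ∃ C : Alg L, C ∈ K ∧ ∃ e : A.carrier ↪[L] C.carrier,
      ∀ (n : ℕ) (φ : L.Formula (Fin (n + 1))), GoodF K φ → ∀ x : Fin n → A.carrier,
      ∃ b, φ.Realize (Fin.snoc (fun i => e (x i)) b : Fin (n + 1) → C.carrier) := by
  classical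
  choose C hC e he using finite_step (K := K) A hA
  let ι := Finset (Σ n : ℕ, L.Formula (Fin (n + 1)) × (Fin n → A.carrier))
  let F : Ultrafilter ι := Ultrafilter.of atTop
  have hF : (F : Filter ι) ≤ atTop := Ultrafilter.of_le _
  haveI : ∀ i, Nonempty (C i).carrier := fun i => hne.map (e i)
  obtain ⟨h, hh, hinj⟩ := exists_upHom F C (fun i => e i)
    (fun n f v => Eventually.of_forall fun i => (e i).map_fun f v)
  have hi : Function.Injective h := fun x y hxy => by
    obtain ⟨i, hi⟩ := ((hinj x y).1 hxy).exists
    exact (e i).injective hi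
  refine ⟨Alg.uprod F C, hU ι F C hC, Embedding.ofInjective hi, fun n φ hφ x => ?_⟩
  have hex : ∀ i : ι, ∃ b : (C i).carrier, (⟨n, φ, x⟩ : Σ n : ℕ, L.Formula (Fin (n + 1)) ×
      (Fin n → A.carrier)) ∈ i →
      φ.Realize (Fin.snoc (fun j => e i (x j)) b : Fin (n + 1) → (C i).carrier) := by
    intro i
    by_cases hp : (⟨n, φ, x⟩ : Σ n : ℕ, L.Formula (Fin (n + 1)) × (Fin n → A.carrier)) ∈ i
    · obtain ⟨b, hb⟩ := he i _ hp hφ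
      exact ⟨b, fun _ => hb⟩
    · exact ⟨Classical.arbitrary _, fun h => absurd h hp⟩
  choose b hb using hex
  refine ⟨((b : ∀ i, (C i).carrier) : Filter.Product (F : Filter ι) (fun i => (C i).carrier)), ?_⟩
  have key := (Ultraproduct.realize_formula_cast (u := F) (M := fun i => (C i).carrier) φ
    (Fin.snoc (fun j i => e i (x j)) b : Fin (n + 1) → ∀ i, (C i).carrier)).2 ?_
  · have heq : (fun j => (((Fin.snoc (fun j i => e i (x j)) b : Fin (n + 1) → ∀ i, (C i).carrier) j :
        ∀ i, (C i).carrier) : Filter.Product (F : Filter ι) (fun i => (C i).carrier))) =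
        (Fin.snoc (fun j => h (x j)) ((b : ∀ i, (C i).carrier) :
          Filter.Product (F : Filter ι) (fun i => (C i).carrier)) :
          Fin (n + 1) → Filter.Product (F : Filter ι) (fun i => (C i).carrier)) := by
      funext j
      refine Fin.lastCases ?_ (fun j => ?_) j
      · simp only [Fin.snoc_last]
        exact (Fin.snoc_last (α := fun _ => Filter.Product (F : Filter ι)
          (fun i => (C i).carrier)) _ _).symm
      · simp only [Fin.snoc_castSucc]
        refine (hh (x j)).symm.trans ?_
        exact (Fin.snoc_castSucc (α := fun _ => Filter.Product (F : Filter ι)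
          (fun i => (C i).carrier)) _ (fun j => h (x j)) j).symm
    rw [heq] at key
    exact key
  · have : ∀ᶠ i in (F : Filter ι), (⟨n, φ, x⟩ : Σ n : ℕ, L.Formula (Fin (n + 1)) ×
      (Fin n → A.carrier)) ∈ i := by
      refine hF ?_
      filter_upwards [eventually_ge_atTop ({⟨n, φ, x⟩} : ι)] with i hi
      exact hi (Finset.mem_singleton_self _)
    filter_upwards [this] with i hi
    convert hb i hi using 1
    funext j
    refine Fin.lastCases ?_ (fun j => ?_) j
    · simp only [Fin.snoc_last]
    · simp only [Fin.snoc_castSucc]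

/-- Direct limits of countable chains of nonempty algebras stay in the class. -/
theorem chain_mem {L : FirstOrder.Language.{u, u}} [L.IsAlgebraic] {K : Set (Alg L)}
    (hK : IsUniversalClass K) (G : ℕ → Alg L) (hG : ∀ n, G n ∈ K)
    (hne : ∀ n, Nonempty (G n).carrier)
    (s : ∀ n, (G n).carrier ↪[L] (G (n + 1)).carrier) :
    (⟨Language.DirectLimit (fun n => (G n).carrier)
      (fun i j h => DirectedSystem.natLERec s i j h)⟩ : Alg L) ∈ K := by
  classical
  let F : Ultrafilter (ULift.{u} ℕ) := Ultrafilter.of atTop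
  have hF : (F : Filter (ULift.{u} ℕ)) ≤ atTop := Ultrafilter.of_le _
  let t := fun (i j : ℕ) (h : i ≤ j) => DirectedSystem.natLERec s i j h
  let C : ULift.{u} ℕ → Alg L := fun i => G i.down
  let g : ∀ (m : ℕ) (i : ULift.{u} ℕ), (G m).carrier → (C i).carrier := fun m i a =>
    if h : m ≤ i.down then t m i.down h a else (hne i.down).some
  have hge : ∀ m : ℕ, ∀ᶠ i in (F : Filter (ULift.{u} ℕ)), m ≤ i.down := fun m =>
    hF (eventually_ge_atTop (ULift.up m))
  have hex := fun m => exists_upHom F C (g m) (fun n f v => by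
    filter_upwards [hge m] with i hi
    have : g m i = t m i.down hi := by
      funext a
      simp only [g, dif_pos hi]
    rw [this]
    exact (t m i.down hi).map_fun f v)
  choose h hh hinj using hex
  have hi : ∀ m, Function.Injective (h m) := fun m x y hxy => by
    obtain ⟨i, hi, hi'⟩ := (((hinj m x y).1 hxy).and (hge m)).exists
    simp only [g, dif_pos hi'] at hi
    exact (t m i.down hi').injective hi
  refine hK.2.1 _ (Alg.uprod F C) (hK.2.2 _ F C fun i => hG _) ⟨?_⟩
  refine FirstOrder.Language.DirectLimit.lift L ℕ (G := fun n => (G n).carrier) (f := t)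
    (g := fun m => (Embedding.ofInjective (hi m) :
      (G m).carrier ↪[L] Filter.Product (F : Filter (ULift.{u} ℕ)) (fun i => (C i).carrier))) ?_
  intro i j hij x
  change h j _ = h i x
  rw [hh, hh]
  refine Quotient.sound' ?_
  have := hge j
  change ∀ᶠ k in (F : Filter (ULift.{u} ℕ)), _
  filter_upwards [this] with k hk
  simp only [g, dif_pos hk, dif_pos (hij.trans hk)]
  exact DirectedSystem.map_map' (f := fun i j h => t i j h) hij hk x

/-- The totality property used below. -/
def TotalOn {L : FirstOrder.Language.{u, u}} (K : Set (Alg L)) (B : Alg L) : Prop :=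
  ∀ (n : ℕ), 0 < n → ∀ (φ : L.Formula (Fin (n + 1))), GoodF K φ → ∀ x : Fin n → B.carrier,
    ∃ b, φ.Realize (Fin.snoc x b : Fin (n + 1) → B.carrier)

theorem TotalOn.dom {L : FirstOrder.Language.{u, u}} {K : Set (Alg L)} {B : Alg L} (hB : B ∈ K)
    (h : TotalOn K B) : ∀ n : ℕ, 0 < n → ∀ f : PartialFunOn K n, IsImplicitOp f → Extendable f →
        ∀ x : Fin n → B.carrier, (f B hB x).Dom := by
  rintro n hn f ⟨⟨φ, hφ⟩, ho⟩ he x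
  obtain ⟨b, hb⟩ := h n hn φ (goodF_of hφ ho he) x
  exact Part.dom_iff_mem.2 ⟨b, (hφ B hB x b).2 hb⟩

theorem exists_total_of_nonempty {L : FirstOrder.Language.{u, u}} [L.IsAlgebraic]
    {K : Set (Alg L)} (hK : IsUniversalClass K) (A : Alg L) (hA : A ∈ K)
    (hne : Nonempty A.carrier) :
    ∃ B : Alg L, B ∈ K ∧ Nonempty (A.carrier ↪[L] B.carrier) ∧ TotalOn K B := by
  classical
  let X := {C : Alg L // C ∈ K ∧ Nonempty C.carrier}
  have hstep : ∀ C : X, ∃ D : X, ∃ e : C.1.carrier ↪[L] D.1.carrier,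
      ∀ (n : ℕ) (φ : L.Formula (Fin (n + 1))), GoodF K φ → ∀ x : Fin n → C.1.carrier,
      ∃ b, φ.Realize (Fin.snoc (fun i => e (x i)) b : Fin (n + 1) → D.1.carrier) := by
    intro C
    obtain ⟨D, hD, e, he⟩ := one_step hK.2.2 C.1 C.2.1 C.2.2
    exact ⟨⟨D, hD, C.2.2.map e⟩, e, he⟩
  choose nx e he using hstep
  let G : ℕ → X := fun n => Nat.rec ⟨A, hA, hne⟩ (fun _ C => nx C) n
  let s : ∀ n, (G n).1.carrier ↪[L] (G (n + 1)).1.carrier := fun n => e (G n)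
  let t := fun (i j : ℕ) (h : i ≤ j) => DirectedSystem.natLERec s i j h
  have hB := chain_mem hK (fun n => (G n).1) (fun n => (G n).2.1) (fun n => (G n).2.2) s
  refine ⟨_, hB, ⟨DirectLimit.of L ℕ (fun n => (G n).1.carrier) t 0⟩, ?_⟩
  intro n _ φ hφ x
  obtain ⟨m, y, rfl⟩ := DirectLimit.exists_quotient_mk'_sigma_mk'_eq
    (fun n => (G n).1.carrier) t x
  obtain ⟨b, hb⟩ := he (G m) n φ hφ y
  have := hφ.1 (G (m + 1)).1 _ (G (m + 1)).2.1 hB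
    (DirectLimit.of L ℕ (fun n => (G n).1.carrier) t (m + 1)).toHom _ b hb
  refine ⟨DirectLimit.of L ℕ (fun n => (G n).1.carrier) t (m + 1) b, ?_⟩
  have heq : (fun i => DirectLimit.of L ℕ (fun n => (G n).1.carrier) t (m + 1) (e (G m) (y i))) =
      fun i => DirectLimit.of L ℕ (fun n => (G n).1.carrier) t m (y i) := by
    funext i
    refine Eq.trans ?_ (DirectLimit.of_f (L := L) (ι := ℕ) (G := fun n => (G n).1.carrier) (f := t)
      (i := m) (j := m + 1) (hij := Nat.le_succ m) (x := y i))
    congr 1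
    simp only [t, DirectedSystem.coe_natLERec]
    exact (Nat.leRecOn_succ' (C := fun n => (G n).1.carrier) (next := fun {k} => s k) (y i)).symm
  change φ.Realize (Fin.snoc (fun i => DirectLimit.of L ℕ (fun n => (G n).1.carrier) t m (y i)) _ :
    Fin (n + 1) → Language.DirectLimit (fun n => (G n).1.carrier) t)
  rw [← heq]
  exact this

theorem exists_total {L : FirstOrder.Language.{u, u}} [L.IsAlgebraic]
    {K : Set (Alg L)} (hK : IsUniversalClass K) (A : Alg L) (hA : A ∈ K) :
    ∃ B : Alg L, B ∈ K ∧ Nonempty (A.carrier ↪[L] B.carrier) ∧ TotalOn K B := by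
  by_cases hne : Nonempty A.carrier
  · exact exists_total_of_nonempty hK A hA hne
  rw [not_nonempty_iff] at hne
  by_cases hC : ∃ C : Alg L, C ∈ K ∧ Nonempty C.carrier
  · obtain ⟨C, hC, hCn⟩ := hC
    obtain ⟨B, hB, ⟨e⟩, ht⟩ := exists_total_of_nonempty hK C hC hCn
    refine ⟨B, hB, ⟨?_⟩, ht⟩
    let h : A.carrier →[L] B.carrier := mkHom (fun a => isEmptyElim a)
      (fun n f v => isEmptyElim (funMap f v))
    exact Embedding.ofInjective (f := h) (fun x => isEmptyElim x)
  · exact ⟨A, hA, ⟨Embedding.refl L _⟩, fun n hn φ _ x => isEmptyElim (x ⟨0, hn⟩)⟩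

/-- The image of a homomorphism as an algebra. -/
theorem exists_image {L : FirstOrder.Language.{u, u}} [L.IsAlgebraic] {K : Set (Alg L)}
    (hS : ClosedUnderSub K) (A C : Alg L) (hC : C ∈ K) (h : A.carrier →[L] C.carrier) :
    ∃ D : Alg L, D ∈ K ∧ ∃ g : A.carrier →[L] D.carrier, Function.Surjective g ∧
      ∀ x y, g x = g y ↔ h x = h y := by
  refine ⟨⟨h.range⟩, hS _ C hC ⟨h.range.subtype⟩, h.codRestrict h.range (fun x => ⟨x, rfl⟩),
    ?_, ?_⟩
  · rintro ⟨_, x, rfl⟩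
    exact ⟨x, rfl⟩
  · intro x y
    exact Subtype.ext_iff

/-- A relatively subdirectly irreducible algebra has a critical pair. -/
theorem exists_critical {L : FirstOrder.Language.{u, u}} [L.IsAlgebraic] {K : Set (Alg L)}
    (hS : ClosedUnderSub K) (A : Alg L) (hA : IsRSI K A) :
    ∃ a b : A.carrier, a ≠ b ∧ ∀ C : Alg L, C ∈ K → ∀ h : A.carrier →[L] C.carrier,
      h a ≠ h b → Function.Injective h := by
  by_contra! hcon
  have H : ∀ p : {p : A.carrier × A.carrier // p.1 ≠ p.2}, ∃ D : Alg L, D ∈ K ∧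
      ∃ g : A.carrier →[L] D.carrier, Function.Surjective g ∧ g p.1.1 ≠ g p.1.2 ∧
        ¬ Function.Injective g := by
    rintro ⟨⟨a, b⟩, hab⟩
    obtain ⟨C, hC, h, hne, hni⟩ := hcon a b hab
    obtain ⟨D, hD, g, hg, hgh⟩ := exists_image hS A C hC h
    refine ⟨D, hD, g, hg, fun hh => hne ((hgh _ _).1 hh), fun hinj => hni fun x y hxy => ?_⟩
    exact hinj ((hgh x y).2 hxy)
  choose D hD g hg hsep hni using H
  let k : A.carrier →[L] (Alg.pi D).carrier := mkHom (fun a p => g p a)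
    (fun n f v => funext fun p => (g p).map_fun f v)
  have hk : Function.Injective k := fun x y hxy => by
    by_contra hne
    exact hsep ⟨(x, y), hne⟩ (congrFun hxy ⟨(x, y), hne⟩)
  obtain ⟨p, hp⟩ := hA.2 _ D hD (Embedding.ofInjective hk) (fun p => hg p)
  exact hni p hp.1

/-- Maximal separating homomorphisms have relatively subdirectly irreducible image. -/
theorem exists_rsi {L : FirstOrder.Language.{u, u}} [L.IsAlgebraic] {K : Set (Alg L)}
    (hS : ClosedUnderSub K) (hU : ClosedUnderUprod K) (B : Alg L) (hB : B ∈ K) (a b : B.carrier)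
    (hab : a ≠ b) :
    ∃ D : Alg L, IsRSI K D ∧ ∃ g : B.carrier →[L] D.carrier, Function.Surjective g ∧
      g a ≠ g b := by
  let S : Set (Set (B.carrier × B.carrier)) :=
    {θ | ∃ C : Alg L, C ∈ K ∧ ∃ h : B.carrier →[L] C.carrier, h a ≠ h b ∧
      ∀ p, p ∈ θ ↔ h p.1 = h p.2}
  have hz : ∃ m, Maximal (fun x => x ∈ S) m := by
    refine zorn_subset S fun c hcS hc => ?_
    rcases c.eq_empty_or_nonempty with rfl | hcn
    · exact ⟨{p | p.1 = p.2}, ⟨B, hB, Hom.id L _, hab, fun p => Iff.rfl⟩, by simp⟩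
    refine ⟨⋃₀ c, ?_, fun s hs => Set.subset_sUnion_of_mem hs⟩
    choose C hC h hsep hker using fun θ : c => hcS θ.2
    haveI : Nonempty c := hcn.to_subtype
    haveI : IsDirectedOrder c := ⟨fun x y => by
      rcases hc.total x.2 y.2 with hxy | hxy
      · exact ⟨y, hxy, le_rfl⟩
      · exact ⟨x, le_rfl, hxy⟩⟩
    let F : Ultrafilter c := Ultrafilter.of atTop
    have hF : (F : Filter c) ≤ atTop := Ultrafilter.of_le _
    obtain ⟨k, -, hk⟩ := exists_upHom F C (fun i => h i)
      (fun n f v => Eventually.of_forall fun i => (h i).map_fun f v)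
    refine ⟨Alg.uprod F C, hU _ F C hC, k, fun hh => ?_, fun p => ⟨?_, fun hp => ?_⟩⟩
    · obtain ⟨i, hi⟩ := ((hk a b).1 hh).exists
      exact hsep i hi
    · rintro ⟨θ, hθ, hp⟩
      refine (hk _ _).2 (hF ?_)
      filter_upwards [eventually_ge_atTop (⟨θ, hθ⟩ : c)] with i hi
      exact (hker i p).1 (hi hp)
    · obtain ⟨i, hi⟩ := ((hk _ _).1 hp).exists
      exact ⟨i.1, i.2, (hker i p).2 hi⟩
  obtain ⟨θ, ⟨C, hC, h, hsep, hker⟩, hmax⟩ := hz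
  obtain ⟨D, hD, g, hg, hgh⟩ := exists_image hS B C hC h
  refine ⟨D, ⟨hD, fun ι E hE k hk => ?_⟩, g, hg, fun hh => hsep ((hgh a b).1 hh)⟩
  have hne : k (g a) ≠ k (g b) := fun hh => hsep ((hgh a b).1 (k.injective hh))
  obtain ⟨i, hi⟩ := Function.ne_iff.1 hne
  refine ⟨i, fun x y hxy => ?_, hk i⟩
  obtain ⟨x, rfl⟩ := hg x
  obtain ⟨y, rfl⟩ := hg y
  let q : B.carrier →[L] (E i).carrier := mkHom (fun z => k (g z) i) (fun n f v => by
    rw [g.map_fun, k.map_fun]; rfl)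
  have hq : {p : B.carrier × B.carrier | q p.1 = q p.2} ∈ S :=
    ⟨E i, hE i, q, hi, fun p => Iff.rfl⟩
  have hle : θ ≤ {p : B.carrier × B.carrier | q p.1 = q p.2} := fun p hp => by
    have : g p.1 = g p.2 := (hgh _ _).2 ((hker p).1 hp)
    change k (g p.1) i = k (g p.2) i
    rw [this]
  have := hmax hq hle (show (x, y) ∈ _ from hxy)
  exact (hgh x y).2 ((hker (x, y)).1 this)

theorem TotalOn.image {L : FirstOrder.Language.{u, u}} {K : Set (Alg L)} {B D : Alg L}
    (hB : B ∈ K) (hD : D ∈ K) (h : TotalOn K B) (g : B.carrier →[L] D.carrier)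
    (hg : Function.Surjective g) : TotalOn K D := by
  intro n hn φ hφ x
  choose y hy using fun i => hg (x i)
  obtain ⟨b, hb⟩ := h n hn φ hφ y
  refine ⟨g b, ?_⟩
  have := hφ.1 B D hB hD g y b hb
  simpa only [hy] using this

end Helpers

/-- Let `K` be a universal class and `A ∈ K`. Then there exists `B ∈ K`
extending `A` on which every extendable implicit operation of `K` is total; moreover, if `K`
is a quasivariety and `A` is subdirectly irreducible relative to `K`, then `B` can be chosen
subdirectly irreducible relative to `K`. -/
theorem statement_13 {L : FirstOrder.Language.{u, u}} [L.IsAlgebraic]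
    {K : Set (Alg L)} (hK : IsUniversalClass K) (A : Alg L) (hA : A ∈ K) :
    (∃ (B : Alg L) (hB : B ∈ K), Nonempty (A.carrier ↪[L] B.carrier) ∧
      ∀ n : ℕ, 0 < n → ∀ f : PartialFunOn K n, IsImplicitOp f → Extendable f →
        ∀ x : Fin n → B.carrier, (f B hB x).Dom) ∧
    (IsQuasivariety K → IsRSI K A →
      ∃ (B : Alg L) (hB : B ∈ K), Nonempty (A.carrier ↪[L] B.carrier) ∧ IsRSI K B ∧
        ∀ n : ℕ, 0 < n → ∀ f : PartialFunOn K n, IsImplicitOp f → Extendable f →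
          ∀ x : Fin n → B.carrier, (f B hB x).Dom) := by
  refine ⟨?_, fun _ hR => ?_⟩
  · obtain ⟨B, hB, he, ht⟩ := exists_total hK A hA
    exact ⟨B, hB, he, ht.dom hB⟩
  · obtain ⟨B, hB, ⟨e⟩, ht⟩ := exists_total hK A hA
    obtain ⟨a, b, hab, hcrit⟩ := exists_critical hK.2.1 A hR
    obtain ⟨D, hD, g, hg, hne⟩ := exists_rsi hK.2.1 hK.2.2 B hB (e a) (e b)
      (fun h => hab (e.injective h))
    have hinj := hcrit D hD.1 (g.comp e.toHom) hne
    exact ⟨D, hD.1, ⟨Embedding.ofInjective hinj⟩, hD, (ht.image hB hD.1 g hg).dom hD.1⟩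

end Impl
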